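/- Let Ω ⊆ ℂ^{n+m} be a pseudoconvex domain with coordinates (z,w), p(z,w) = w, D = p(Ω), Ω_w = p^{-1}(w) ∩ Ω, and ψ plurisubharmonic on Ω. Let ξ(·) : D → ℓ₁^{(n)} be holomorphic with the locally uniformly bounded property. Then the function (z,w) ↦ K^{ψ_w}_{ξ(w),Ω_w}(z) is upper-semicontinuous on Ω, where ψ_w = ψ|_{Ω_w}. -/

import Mathlib

open MeasureTheory Filter Topology Complex
open scoped ENNReal
noncomputable section

/-- The total degree `|α|` of a multi-index. -/
def mdeg {n : ℕ} (α : Fin n → ℕ) : ℕ := ∑ i, α i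

/-- The factorial `α!` of a multi-index. -/
def mfact {n : ℕ} (α : Fin n → ℕ) : ℕ := ∏ i, Nat.factorial (α i)

/-- Partial derivative in the `i`-th coordinate direction. -/
def pderivC {n : ℕ} (i : Fin n) (f : (Fin n → ℂ) → ℂ) : (Fin n → ℂ) → ℂ :=
  fun z => deriv (fun t : ℂ => f (Function.update z i t)) (z i)

/-- Iterated partial derivative `∂^{|α|} f / ∂z^α`. -/
def multiDeriv {n : ℕ} (α : Fin n → ℕ) (f : (Fin n → ℂ) → ℂ) : (Fin n → ℂ) → ℂ :=
  (List.finRange n).foldr (fun i g => (pderivC i)^[α i] g) f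

/-- Membership in `ℓ₁^{(n)}`: `∑_α |ξ_α| ρ^{|α|} < ∞` for every `ρ > 0`. -/
def MemL1 {n : ℕ} (ξ : (Fin n → ℕ) → ℂ) : Prop :=
  ∀ ρ : ℝ, 0 < ρ → Summable fun α : Fin n → ℕ => ‖ξ α‖ * ρ ^ mdeg α

/-- The action `(ξ·f)(z) = ∑_α ξ_α f^{(α)}(z)/α!`. -/
def xiAct {n : ℕ} (ξ : (Fin n → ℕ) → ℂ) (f : (Fin n → ℂ) → ℂ) (z : Fin n → ℂ) : ℂ :=
  ∑' α : Fin n → ℕ, ξ α * multiDeriv α f z / (mfact α : ℂ)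

/-- Plurisubharmonicity of an `EReal`-valued function on a set: upper semicontinuity
together with the sub-mean value inequality on every complex circle whose closed disc
is contained in the set (expressed via integrable real-valued majorants). -/
def PlurisubharmonicOn {E : Type*} [NormedAddCommGroup E] [NormedSpace ℂ E]
    (f : E → EReal) (s : Set E) : Prop :=
  UpperSemicontinuousOn f s ∧
  ∀ z ∈ s, ∀ v : E, (∀ t : ℂ, ‖t‖ ≤ 1 → z + t • v ∈ s) →
    ∀ g : ℝ → ℝ, IntervalIntegrable g volume 0 (2 * Real.pi) →
      (∀ θ : ℝ, f (z + Complex.exp (θ * Complex.I) • v) ≤ (g θ : EReal)) →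
      f z ≤ (((2 * Real.pi)⁻¹ * ∫ θ in (0:ℝ)..(2 * Real.pi), g θ : ℝ) : EReal)

/-- The weighted `L²` integral `∫_D |f|² e^{-ψ}`. -/
def wL2 {n : ℕ} (D : Set (Fin n → ℂ)) (ψ : (Fin n → ℂ) → ℝ) (f : (Fin n → ℂ) → ℂ) : ℝ≥0∞ :=
  ∫⁻ z in D, ENNReal.ofReal (‖f z‖ ^ 2 * Real.exp (-ψ z))

/-- Membership in the weighted Bergman space `A²(D, e^{-ψ})`. -/
def MemA2 {n : ℕ} (D : Set (Fin n → ℂ)) (ψ : (Fin n → ℂ) → ℝ) (f : (Fin n → ℂ) → ℂ) : Prop :=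
  DifferentiableOn ℂ f D ∧ wL2 D ψ f < ⊤

/-- The weighted `ξ`-Bergman kernel `K^ψ_{ξ,D}(z)`. -/
def xiBergman {n : ℕ} (ξ : (Fin n → ℕ) → ℂ) (D : Set (Fin n → ℂ))
    (ψ : (Fin n → ℂ) → ℝ) (z : Fin n → ℂ) : ℝ≥0∞ :=
  ⨆ f : {f // MemA2 D ψ f}, ENNReal.ofReal (‖xiAct ξ f.1 z‖ ^ 2) / wL2 D ψ f.1

/-- The locally uniformly bounded property for a functional-valued function on `D`. -/
def LocUnifBdd {n m : ℕ} (ξ : (Fin m → ℂ) → (Fin n → ℕ) → ℂ) (D : Set (Fin m → ℂ)) : Prop :=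
  ∀ w ∈ D, ∀ ρ : ℝ, 0 < ρ → ∃ V ∈ 𝓝 w, ∃ C : ℝ,
    ∀ w' ∈ V ∩ D, (∑' α : Fin n → ℕ, ENNReal.ofReal (‖ξ w' α‖ * ρ ^ mdeg α)) ≤ ENNReal.ofReal C

/-- Pseudoconvexity of an open set: existence of a continuous plurisubharmonic
exhaustion function. -/
def Pseudoconvex {E : Type*} [NormedAddCommGroup E] [NormedSpace ℂ E] (Ω : Set E) : Prop :=
  IsOpen Ω ∧ ∃ u : E → ℝ, ContinuousOn u Ω ∧
    PlurisubharmonicOn (fun x => (u x : EReal)) Ω ∧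
    ∀ c : ℝ, ∃ K : Set E, IsCompact K ∧ K ⊆ Ω ∧ {x ∈ Ω | u x ≤ c} ⊆ K

/-- The fiberwise `ξ(w)`-Bergman kernel `K^{ψ_w}_{ξ(w),Ω_w}(z)` of the fibration
`p(z,w) = w` of `Ω`. -/
def fiberKernel {n m : ℕ} (ξ : (Fin m → ℂ) → (Fin n → ℕ) → ℂ)
    (Ω : Set ((Fin n → ℂ) × (Fin m → ℂ))) (ψ : (Fin n → ℂ) × (Fin m → ℂ) → ℝ)
    (p : (Fin n → ℂ) × (Fin m → ℂ)) : ℝ≥0∞ :=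
  xiBergman (ξ p.2) {z | (z, p.2) ∈ Ω} (fun z => ψ (z, p.2)) p.1

/-! ### Estimates for bounded holomorphic functions on a ball -/

section Holomorphic

lemma mapsTo_closedBall_of_norm_le {E : Type*} [NormedAddCommGroup E] {f : E → ℂ} {c : E} {R M : ℝ}
    (hR : 0 < R) (hM : ∀ y ∈ Metric.ball c R, ‖f y‖ ≤ M) :
    Set.MapsTo f (Metric.ball c R) (Metric.closedBall (f c) (2 * M)) := by
  intro y hy
  rw [mem_closedBall_iff_norm]
  linarith [norm_sub_le (f y) (f c), hM y hy, hM c (Metric.mem_ball_self hR)]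

variable {E : Type*} [NormedAddCommGroup E] [NormedSpace ℂ E]

lemma norm_sub_le_of_norm_le_on_ball {f : E → ℂ} {c z : E} {R M : ℝ}
    (hd : DifferentiableOn ℂ f (Metric.ball c R)) (hM : ∀ y ∈ Metric.ball c R, ‖f y‖ ≤ M)
    (hz : z ∈ Metric.ball c R) : ‖f z - f c‖ ≤ 2 * M / R * ‖z - c‖ := by
  have hR : 0 < R := Metric.nonempty_ball.mp ⟨_, hz⟩
  simpa [dist_eq_norm] using
    Complex.dist_le_div_mul_dist_of_mapsTo_ball hd (mapsTo_closedBall_of_norm_le hR hM) hz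

lemma norm_fderiv_le_of_norm_le_on_ball {f : E → ℂ} {c : E} {R M : ℝ} (hR : 0 < R)
    (hd : DifferentiableOn ℂ f (Metric.ball c R)) (hM : ∀ y ∈ Metric.ball c R, ‖f y‖ ≤ M) :
    ‖fderiv ℂ f c‖ ≤ 2 * M / R :=
  Complex.norm_fderiv_le_div_of_mapsTo_ball hd (mapsTo_closedBall_of_norm_le hR hM) hR

lemma norm_sub_sub_fderiv_le {f : E → ℂ} {c z : E} {R M : ℝ}
    (hd : DifferentiableOn ℂ f (Metric.ball c R)) (hM : ∀ y ∈ Metric.ball c R, ‖f y‖ ≤ M)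
    (hz : z ∈ Metric.ball c R) :
    ‖f z - f c - fderiv ℂ f c (z - c)‖ ≤ 4 * M * (‖z - c‖ / R) ^ 2 := by
  have hR : 0 < R := Metric.nonempty_ball.mp ⟨_, hz⟩
  have hL := norm_fderiv_le_of_norm_le_on_ball hR hd hM
  have hda : HasFDerivAt f (fderiv ℂ f c) c :=
    (hd.differentiableAt (Metric.ball_mem_nhds c hR)).hasFDerivAt
  have key := Complex.dist_le_mul_div_pow_of_mapsTo_ball_of_isLittleO (n := 1)
    (f := fun y => f y - fderiv ℂ f c (y - c)) (c := c) (R₁ := R) (R₂ := 4 * M)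
    (hd.sub ((fderiv ℂ f c).differentiable.comp (differentiable_id.sub_const c)).differentiableOn)
    ?_ ?_ hz
  · simpa [dist_eq_norm, sub_right_comm] using key
  · intro y hy
    have h1 := norm_sub_le_of_norm_le_on_ball hd hM hy
    have h2 := (fderiv ℂ f c).le_of_opNorm_le hL (y - c)
    have hyR : ‖y - c‖ ≤ R := (mem_ball_iff_norm.mp hy).le
    have hM0 : 0 ≤ M := (norm_nonneg _).trans (hM c (Metric.mem_ball_self hR))
    have h3 : 2 * M / R * ‖y - c‖ ≤ 2 * M := by
      calc 2 * M / R * ‖y - c‖ ≤ 2 * M / R * R := by gcongr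
        _ = 2 * M := by field_simp
    rw [mem_closedBall_iff_norm]
    simp only [sub_self, map_zero, sub_zero]
    have h4 := norm_sub_le (f y - f c) (fderiv ℂ f c (y - c))
    rw [sub_right_comm] at h4
    linarith
  · have := hda.isLittleO
    simp only [sub_self, map_zero, sub_zero, pow_one]
    simpa [sub_right_comm] using this.norm_right

/-! ### Locally bounded pointwise convergence -/

/-- Every point of `U` has a ball on which the functions `f j` are eventually holomorphic and
bounded by a common constant. -/
def LocallyBoundedHolo (f : ℕ → E → ℂ) (U : Set E) : Prop :=
  ∀ x ∈ U, ∃ r > 0, ∃ M : ℝ, ∀ᶠ j in atTop,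
    DifferentiableOn ℂ (f j) (Metric.ball x r) ∧ ∀ y ∈ Metric.ball x r, ‖f j y‖ ≤ M

/-- Pointwise convergence on `U` of a locally bounded sequence of holomorphic functions. -/
structure BoundedlyTendsto (f : ℕ → E → ℂ) (F : E → ℂ) (U : Set E) : Prop where
  bdd : LocallyBoundedHolo f U
  lim : ∀ x ∈ U, Tendsto (fun j => f j x) atTop (𝓝 (F x))

variable {f : ℕ → E → ℂ} {F : E → ℂ} {U : Set E}

lemma LocallyBoundedHolo.comp (h : LocallyBoundedHolo f U) {φ : ℕ → ℕ}
    (hφ : Tendsto φ atTop atTop) : LocallyBoundedHolo (fun j => f (φ j)) U := by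
  intro x hx
  obtain ⟨r, hr, M, hM⟩ := h x hx
  exact ⟨r, hr, M, hφ.eventually hM⟩

lemma BoundedlyTendsto.comp (h : BoundedlyTendsto f F U) {φ : ℕ → ℕ}
    (hφ : Tendsto φ atTop atTop) : BoundedlyTendsto (fun j => f (φ j)) F U :=
  ⟨h.bdd.comp hφ, fun x hx => (h.lim x hx).comp hφ⟩

lemma BoundedlyTendsto.exists_hasFDerivAt [FiniteDimensional ℂ E] (hU : IsOpen U)
    (h : BoundedlyTendsto f F U) {x : E} (hx : x ∈ U) :
    ∃ φ : ℕ → ℕ, StrictMono φ ∧ ∃ L, HasFDerivAt F L x ∧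
      Tendsto (fun j => fderiv ℂ (f (φ j)) x) atTop (𝓝 L) := by
  obtain ⟨r, hr, M, hM⟩ := h.bdd x hx
  have : ProperSpace (E →L[ℂ] ℂ) := FiniteDimensional.proper ℂ _
  have hb : ∃ᶠ j in atTop, fderiv ℂ (f j) x ∈ Metric.closedBall (0 : E →L[ℂ] ℂ) (2 * M / r) := by
    refine (hM.mono fun j hj => ?_).frequently
    rw [mem_closedBall_zero_iff]
    exact norm_fderiv_le_of_norm_le_on_ball hr hj.1 hj.2
  obtain ⟨L, -, φ, hφ, hL⟩ := tendsto_subseq_of_frequently_bounded Metric.isBounded_closedBall hb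
  refine ⟨φ, hφ, L, ?_, hL⟩
  have hbound : ∀ᶠ y in 𝓝 x, ‖F y - F x - L (y - x)‖ ≤ (4 * M / r ^ 2) * ‖‖y - x‖ ^ 2‖ := by
    filter_upwards [Metric.ball_mem_nhds x hr, hU.mem_nhds hx] with y hy hyU
    have hlim : Tendsto (fun j => ‖f (φ j) y - f (φ j) x - fderiv ℂ (f (φ j)) x (y - x)‖) atTop
        (𝓝 ‖F y - F x - L (y - x)‖) :=
      ((((h.lim y hyU).comp hφ.tendsto_atTop).sub ((h.lim x hx).comp hφ.tendsto_atTop)).sub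
        (((ContinuousLinearMap.apply ℂ ℂ (y - x)).continuous.tendsto L).comp hL)).norm
    refine le_of_tendsto hlim ((hφ.tendsto_atTop.eventually hM).mono fun j hj => ?_)
    refine (norm_sub_sub_fderiv_le hj.1 hj.2 hy).trans_eq ?_
    rw [Real.norm_of_nonneg (by positivity)]
    field_simp
  refine HasFDerivAt.of_isLittleO ((Asymptotics.IsBigO.of_bound _ hbound).trans_isLittleO ?_)
  have h0 : Tendsto (fun y : E => y - x) (𝓝 x) (𝓝 0) := by
    simpa using (continuous_id.sub continuous_const).tendsto x (f := fun y : E => y - x)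
  have := (Asymptotics.isLittleO_norm_pow_id (E' := E) one_lt_two).comp_tendsto h0
  simpa [Function.comp_def] using this

lemma BoundedlyTendsto.differentiableOn [FiniteDimensional ℂ E] (hU : IsOpen U)
    (h : BoundedlyTendsto f F U) : DifferentiableOn ℂ F U := fun x hx => by
  obtain ⟨-, -, L, hL, -⟩ := h.exists_hasFDerivAt hU hx
  exact hL.differentiableAt.differentiableWithinAt

lemma BoundedlyTendsto.tendsto_fderiv [FiniteDimensional ℂ E] (hU : IsOpen U)
    (h : BoundedlyTendsto f F U) {x : E} (hx : x ∈ U) :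
    Tendsto (fun j => fderiv ℂ (f j) x) atTop (𝓝 (fderiv ℂ F x)) := by
  refine tendsto_of_subseq_tendsto fun ns hns => ?_
  obtain ⟨φ, -, L, hL, hlim⟩ := (h.comp hns).exists_hasFDerivAt hU hx
  exact ⟨φ, hL.fderiv ▸ hlim⟩

lemma BoundedlyTendsto.tendsto_apply (h : BoundedlyTendsto f F U) {x : E} (hx : x ∈ U)
    {u : ℕ → E} (hu : Tendsto u atTop (𝓝 x)) :
    Tendsto (fun j => f j (u j)) atTop (𝓝 (F x)) := by
  obtain ⟨r, hr, M, hM⟩ := h.bdd x hx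
  have h0 : Tendsto (fun j => f j (u j) - f j x) atTop (𝓝 0) := by
    have h1 : Tendsto (fun j => 2 * M / r * ‖u j - x‖) atTop (𝓝 0) := by
      have := (tendsto_iff_norm_sub_tendsto_zero.mp hu).const_mul (2 * M / r)
      simpa using this
    refine squeeze_zero_norm' ?_ h1
    filter_upwards [hM, hu (Metric.ball_mem_nhds x hr)] with j hj hju
    exact norm_sub_le_of_norm_le_on_ball hj.1 hj.2 hju
  simpa using h0.add (h.lim x hx)

/-- Directional derivatives of a holomorphic function are holomorphic. -/
lemma DifferentiableOn.fderiv_apply_of_isOpen [FiniteDimensional ℂ E] {g : E → ℂ} (hU : IsOpen U)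
    (hg : DifferentiableOn ℂ g U) (v : E) : DifferentiableOn ℂ (fun x => fderiv ℂ g x v) U := by
  have hc : Tendsto (fun k : ℕ => ‖(k : ℂ) + 1‖) atTop atTop := by
    have : ∀ k : ℕ, ‖(k : ℂ) + 1‖ = (k : ℝ) + 1 := fun k => by
      rw [← Nat.cast_succ, Complex.norm_natCast, Nat.cast_succ]
    simpa only [this] using tendsto_atTop_add_const_right _ _ tendsto_natCast_atTop_atTop
  refine BoundedlyTendsto.differentiableOn hU
    (f := fun (k : ℕ) x => ((k : ℂ) + 1) • (g (x + ((k : ℂ) + 1)⁻¹ • v) - g x)) ⟨?_, ?_⟩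
  · intro x hx
    have hcont : ContinuousAt g x := (hg.differentiableAt (hU.mem_nhds hx)).continuousAt
    have hbd : ∀ᶠ y in 𝓝 x, ‖g y‖ < ‖g x‖ + 1 :=
      hcont.norm.eventually_lt continuousAt_const (by linarith)
    obtain ⟨r, hr, hball⟩ := Metric.eventually_nhds_iff_ball.mp (hbd.and (hU.mem_nhds hx))
    set M := ‖g x‖ + 1
    refine ⟨r / 2, half_pos hr, 2 * M / (r / 2) * ‖v‖, ?_⟩
    have hsmall : Tendsto (fun k : ℕ => ((k : ℂ) + 1)⁻¹ • v) atTop (𝓝 0) := by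
      have : Tendsto (fun k : ℕ => ((k : ℂ) + 1)⁻¹) atTop (𝓝 0) :=
        tendsto_inv₀_cobounded.comp (tendsto_norm_atTop_iff_cobounded.mp hc)
      simpa using this.smul_const v
    filter_upwards [hsmall (Metric.ball_mem_nhds 0 (half_pos hr))] with k hk
    rw [Set.mem_preimage, mem_ball_zero_iff] at hk
    have hmem : ∀ y ∈ Metric.ball x (r / 2), y + ((k : ℂ) + 1)⁻¹ • v ∈ Metric.ball x r := by
      intro y hy
      rw [mem_ball_iff_norm] at hy ⊢
      rw [add_sub_right_comm]
      linarith [norm_add_le (y - x) (((k : ℂ) + 1)⁻¹ • v)]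
    have hsub : Metric.ball x (r / 2) ⊆ U := fun y hy =>
      (hball y (Metric.ball_subset_ball (by linarith) hy)).2
    refine ⟨?_, fun y hy => ?_⟩
    · refine (DifferentiableOn.sub ?_ (hg.mono hsub)).const_smul ((k : ℂ) + 1)
      exact hg.comp (differentiable_id.add_const _).differentiableOn
        fun y hy => (hball _ (hmem y hy)).2
    · have hyb : Metric.ball y (r / 2) ⊆ Metric.ball x r := by
        refine Metric.ball_subset_ball' ?_
        linarith [Metric.mem_ball.mp hy]
      have hk0 : (k : ℂ) + 1 ≠ 0 := Nat.cast_add_one_ne_zero k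
      have := norm_sub_le_of_norm_le_on_ball (f := g) (c := y) (z := y + ((k : ℂ) + 1)⁻¹ • v)
        (R := r / 2) (M := M)
        (hg.mono fun w hw => (hball w (hyb hw)).2) (fun w hw => (hball w (hyb hw)).1.le)
        (by simpa [mem_ball_iff_norm] using hk)
      rw [norm_smul]
      calc ‖(k : ℂ) + 1‖ * ‖g (y + ((k : ℂ) + 1)⁻¹ • v) - g y‖
          ≤ ‖(k : ℂ) + 1‖ * (2 * M / (r / 2) * ‖y + ((k : ℂ) + 1)⁻¹ • v - y‖) := by gcongr
        _ = 2 * M / (r / 2) * ‖v‖ := by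
          rw [add_sub_cancel_left, norm_smul, norm_inv]
          have := norm_ne_zero_iff.mpr hk0
          field_simp
  · exact fun x hx => (hg.differentiableAt (hU.mem_nhds hx)).hasFDerivAt.lim v hc

/-- **Montel's theorem**: a locally bounded sequence of holomorphic functions on an open set
has a pointwise convergent subsequence. -/
lemma LocallyBoundedHolo.exists_subseq [FiniteDimensional ℂ E] (hU : IsOpen U)
    (h : LocallyBoundedHolo f U) :
    ∃ φ : ℕ → ℕ, StrictMono φ ∧ ∃ F : E → ℂ, BoundedlyTendsto (fun j => f (φ j)) F U := by
  classical
  have : ProperSpace E := FiniteDimensional.proper ℂ E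
  let q : ℕ → E := TopologicalSpace.denseSeq E
  let s : ℕ → ℕ → ℂ := fun j k => if q k ∈ U then f j (q k) else 0
  have hs : ∀ k, ∃ M : ℝ, ∀ j, ‖s j k‖ ≤ M := by
    intro k
    by_cases hk : q k ∈ U
    · obtain ⟨r, hr, M, hM⟩ := h _ hk
      obtain ⟨N, hN⟩ := eventually_atTop.mp hM
      refine ⟨max M (∑ j ∈ Finset.range N, ‖s j k‖), fun j => ?_⟩
      rcases lt_or_ge j N with hj | hj
      · exact le_max_of_le_right (Finset.single_le_sum (f := fun j => ‖s j k‖)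
          (fun _ _ => norm_nonneg _) (Finset.mem_range.mpr hj))
      · refine le_max_of_le_left ?_
        simpa [s, hk] using (hN j hj).2 _ (Metric.mem_ball_self hr)
    · exact ⟨0, fun j => by simp [s, hk]⟩
  choose B hB using hs
  obtain ⟨a, -, φ, hφ, ha⟩ := (isCompact_univ_pi fun k =>
    isCompact_closedBall (0 : ℂ) (B k)).tendsto_subseq (x := s)
    (fun j k _ => by simpa using hB k j)
  rw [tendsto_pi_nhds] at ha
  have hlim : ∀ x, ∃ y, x ∈ U → Tendsto (fun j => f (φ j) x) atTop (𝓝 y) := by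
    intro x
    by_cases hx : x ∈ U
    swap
    · exact ⟨0, fun h => absurd h hx⟩
    suffices CauchySeq fun j => f (φ j) x from
      (cauchySeq_tendsto_of_complete this).imp fun y hy _ => hy
    obtain ⟨r, hr, M, hM⟩ := h x hx
    rw [Metric.cauchySeq_iff']
    intro ε hε
    have hev : ∀ᶠ y in 𝓝 x, 2 * M / r * ‖y - x‖ < ε / 3 := by
      have hc : Continuous fun y : E => 2 * M / r * ‖y - x‖ := by fun_prop
      exact hc.continuousAt.eventually_lt continuousAt_const (by simpa using by positivity)
    obtain ⟨y, ⟨k, rfl⟩, hy⟩ := (TopologicalSpace.denseRange_denseSeq E).inter_nhds_nonempty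
      ((hev.and (hU.mem_nhds hx)).and (Metric.ball_mem_nhds x hr))
    have hqU : q k ∈ U := hy.1.2
    obtain ⟨N₁, hN₁⟩ := Metric.cauchySeq_iff.mp (ha k).cauchySeq (ε / 3) (by positivity)
    obtain ⟨N₂, hN₂⟩ := eventually_atTop.mp (hφ.tendsto_atTop.eventually hM)
    have hclose : ∀ j, N₂ ≤ j → ‖f (φ j) (q k) - f (φ j) x‖ < ε / 3 := fun j hj =>
      (norm_sub_le_of_norm_le_on_ball (hN₂ j hj).1 (hN₂ j hj).2 hy.2).trans_lt hy.1.1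
    refine ⟨max N₁ N₂, fun j hj => ?_⟩
    have hqj : dist (f (φ j) (q k)) (f (φ (max N₁ N₂)) (q k)) < ε / 3 := by
      simpa [s, hqU] using hN₁ j (le_of_max_le_left hj) _ (le_max_left _ _)
    have h1 := hclose j (le_of_max_le_right hj)
    have h2 := hclose _ (le_max_right N₁ N₂)
    rw [← dist_eq_norm] at h1 h2
    rw [dist_comm] at h1
    linarith [dist_triangle4 (f (φ j) x) (f (φ j) (q k)) (f (φ (max N₁ N₂)) (q k))
      (f (φ (max N₁ N₂)) x)]
  choose F hF using hlim
  exact ⟨φ, hφ, F, h.comp hφ.tendsto_atTop, fun x hx => hF x hx⟩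

end Holomorphic

/-! ### Iterated partial derivatives -/

section MultiDeriv

variable {n : ℕ}

lemma pderivC_eq_fderiv {f : (Fin n → ℂ) → ℂ} {z : Fin n → ℂ} (i : Fin n)
    (hf : DifferentiableAt ℂ f z) : pderivC i f z = fderiv ℂ f z (Pi.single i 1) := by
  have h : HasFDerivAt f (fderiv ℂ f z) (Function.update z i (z i)) := by
    simpa using hf.hasFDerivAt
  exact (h.comp_hasDerivAt (z i) (hasDerivAt_update z i (z i))).deriv

lemma DifferentiableOn.pderivC {f : (Fin n → ℂ) → ℂ} {U : Set (Fin n → ℂ)} (hU : IsOpen U)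
    (hf : DifferentiableOn ℂ f U) (i : Fin n) : DifferentiableOn ℂ (pderivC i f) U :=
  (hf.fderiv_apply_of_isOpen hU (Pi.single i 1)).congr fun _ hz =>
    pderivC_eq_fderiv i (hf.differentiableAt (hU.mem_nhds hz))

lemma DifferentiableOn.iterate_pderivC {f : (Fin n → ℂ) → ℂ} {U : Set (Fin n → ℂ)}
    (hU : IsOpen U) (hf : DifferentiableOn ℂ f U) (i : Fin n) (k : ℕ) :
    DifferentiableOn ℂ ((_root_.pderivC i)^[k] f) U := by
  induction k with
  | zero => exact hf
  | succ k ih => rw [Function.iterate_succ_apply']; exact ih.pderivC hU i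

lemma BoundedlyTendsto.pderivC {f : ℕ → (Fin n → ℂ) → ℂ} {F : (Fin n → ℂ) → ℂ}
    {U : Set (Fin n → ℂ)} (hU : IsOpen U) (h : BoundedlyTendsto f F U) (i : Fin n) :
    BoundedlyTendsto (fun j => pderivC i (f j)) (_root_.pderivC i F) U := by
  refine ⟨fun x hx => ?_, fun x hx => ?_⟩
  · obtain ⟨r, hr, M, hM⟩ := h.bdd x hx
    refine ⟨r / 2, half_pos hr, 2 * M / (r / 2) * ‖(Pi.single i 1 : Fin n → ℂ)‖, ?_⟩
    filter_upwards [hM] with j hj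
    refine ⟨(hj.1.pderivC Metric.isOpen_ball i).mono (Metric.ball_subset_ball (by linarith)),
      fun y hy => ?_⟩
    have hyb : Metric.ball y (r / 2) ⊆ Metric.ball x r :=
      Metric.ball_subset_ball' (by linarith [Metric.mem_ball.mp hy])
    rw [pderivC_eq_fderiv i (hj.1.differentiableAt
      (Metric.isOpen_ball.mem_nhds (hyb (Metric.mem_ball_self (half_pos hr)))))]
    exact ContinuousLinearMap.le_of_opNorm_le _ (norm_fderiv_le_of_norm_le_on_ball (half_pos hr)
      (hj.1.mono hyb) fun w hw => hj.2 w (hyb hw)) _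
  · rw [pderivC_eq_fderiv i ((h.differentiableOn hU).differentiableAt (hU.mem_nhds hx))]
    have hlim := ((ContinuousLinearMap.apply ℂ ℂ (Pi.single i 1 : Fin n → ℂ)).continuous.tendsto
      _).comp (h.tendsto_fderiv hU hx)
    refine hlim.congr' ?_
    obtain ⟨r, hr, M, hM⟩ := h.bdd x hx
    filter_upwards [hM] with j hj
    exact (pderivC_eq_fderiv i (hj.1.differentiableAt (Metric.ball_mem_nhds x hr))).symm

lemma BoundedlyTendsto.iterate_pderivC {f : ℕ → (Fin n → ℂ) → ℂ} {F : (Fin n → ℂ) → ℂ}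
    {U : Set (Fin n → ℂ)} (hU : IsOpen U) (h : BoundedlyTendsto f F U) (i : Fin n) (k : ℕ) :
    BoundedlyTendsto (fun j => (_root_.pderivC i)^[k] (f j)) ((_root_.pderivC i)^[k] F) U := by
  induction k with
  | zero => exact h
  | succ k ih => simp only [Function.iterate_succ_apply']; exact ih.pderivC hU i

lemma BoundedlyTendsto.multiDeriv {f : ℕ → (Fin n → ℂ) → ℂ} {F : (Fin n → ℂ) → ℂ}
    {U : Set (Fin n → ℂ)} (hU : IsOpen U) (h : BoundedlyTendsto f F U) (α : Fin n → ℕ) :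
    BoundedlyTendsto (fun j => multiDeriv α (f j)) (_root_.multiDeriv α F) U := by
  unfold _root_.multiDeriv
  induction List.finRange n with
  | nil => exact h
  | cons i l ih => simp only [List.foldr_cons]; exact ih.iterate_pderivC hU i (α i)

lemma iterate_pderivC_update (i : Fin n) (f : (Fin n → ℂ) → ℂ) (z : Fin n → ℂ) (k : ℕ) :
    ∀ t : ℂ, (pderivC i)^[k] f (Function.update z i t) =
      iteratedDeriv k (fun s => f (Function.update z i s)) t := by
  induction k with
  | zero => simp
  | succ k ih =>
    intro t
    rw [Function.iterate_succ_apply', iteratedDeriv_succ]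
    simp only [pderivC, Function.update_idem, Function.update_self, ih]

/-- One-variable **Cauchy estimate** for iterated partial derivatives. -/
lemma norm_iterate_pderivC_le {f : (Fin n → ℂ) → ℂ} {c : Fin n → ℂ} {R δ M : ℝ} (hδ : 0 < δ)
    (hd : DifferentiableOn ℂ f (Metric.ball c R)) (hM : ∀ y ∈ Metric.ball c R, ‖f y‖ ≤ M)
    (i : Fin n) (k : ℕ) {x : Fin n → ℂ} (hx : x ∈ Metric.ball c (R - δ)) :
    ‖(pderivC i)^[k] f x‖ ≤ k.factorial * M / δ ^ k := by
  have hmem : ∀ t ∈ Metric.closedBall (x i) δ, Function.update x i t ∈ Metric.ball c R := by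
    intro t ht
    have h1 : dist (Function.update x i t) x ≤ δ := by
      refine (dist_pi_le_iff hδ.le).mpr fun j => ?_
      rcases eq_or_ne j i with rfl | hj
      · simpa using ht
      · simpa [hj] using hδ.le
    have h2 := Metric.mem_ball.mp hx
    rw [Metric.mem_ball]
    linarith [dist_triangle (Function.update x i t) x c]
  have h := iterate_pderivC_update i f x k (x i)
  rw [Function.update_eq_self] at h
  rw [h]
  refine Complex.norm_iteratedDeriv_le_of_forall_mem_sphere_norm_le k hδ ?_
    fun t ht => hM _ (hmem t (Metric.sphere_subset_closedBall ht))
  refine DifferentiableOn.diffContOnCl_ball (U := Metric.closedBall (x i) δ) ?_ subset_rfl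
  exact hd.comp (fun t _ => (hasDerivAt_update x i t).differentiableAt.differentiableWithinAt) hmem

/-- **Cauchy estimate** for mixed partial derivatives on a polydisc. -/
lemma norm_multiDeriv_le {f : (Fin n → ℂ) → ℂ} {c : Fin n → ℂ} {δ M : ℝ} (hδ : 0 < δ)
    (hd : DifferentiableOn ℂ f (Metric.ball c ((n + 1) * δ)))
    (hM : ∀ y ∈ Metric.ball c ((n + 1) * δ), ‖f y‖ ≤ M) (α : Fin n → ℕ) {x : Fin n → ℂ}
    (hx : x ∈ Metric.ball c δ) : ‖multiDeriv α f x‖ ≤ mfact α * M / δ ^ mdeg α := by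
  have key : ∀ l : List (Fin n),
      DifferentiableOn ℂ (l.foldr (fun i g => (pderivC i)^[α i] g) f)
        (Metric.ball c ((n + 1) * δ)) ∧
      ∀ y ∈ Metric.ball c ((n + 1) * δ - l.length * δ),
        ‖l.foldr (fun i g => (pderivC i)^[α i] g) f y‖ ≤
          (l.map fun i => ((α i).factorial : ℝ) / δ ^ α i).prod * M := by
    intro l
    induction l with
    | nil => exact ⟨hd, by simpa using hM⟩
    | cons i l ih =>
      refine ⟨ih.1.iterate_pderivC Metric.isOpen_ball i (α i), fun y hy => ?_⟩
      refine (norm_iterate_pderivC_le (R := (n + 1) * δ - l.length * δ) hδ (ih.1.mono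
        (Metric.ball_subset_ball (sub_le_self _ (by positivity)))) ih.2 i (α i) ?_).trans_eq ?_
      · convert hy using 2
        push_cast [List.length_cons]
        ring
      · simp only [List.map_cons, List.prod_cons]
        ring
  refine ((key (List.finRange n)).2 x ?_).trans_eq ?_
  · convert hx using 2
    rw [List.length_finRange]
    ring
  · have hprod : ((List.finRange n).map fun i => ((α i).factorial : ℝ) / δ ^ α i).prod =
        ∏ i, ((α i).factorial : ℝ) / δ ^ α i := by
      rw [← List.ofFn_eq_map, List.prod_ofFn]
    rw [hprod, Finset.prod_div_distrib, Finset.prod_pow_eq_pow_sum, mfact, mdeg]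
    push_cast
    ring

lemma iterate_pderivC_const_mul (a : ℂ) (f : (Fin n → ℂ) → ℂ) (i : Fin n) (k : ℕ) :
    (pderivC i)^[k] (fun z => a * f z) = fun w => a * (pderivC i)^[k] f w := by
  induction k with
  | zero => rfl
  | succ k ih =>
    rw [Function.iterate_succ_apply', Function.iterate_succ_apply', ih]
    funext z
    simp only [pderivC, deriv_const_mul_field']

lemma multiDeriv_const_mul (a : ℂ) (f : (Fin n → ℂ) → ℂ) (α : Fin n → ℕ) :
    multiDeriv α (fun z => a * f z) = fun z => a * multiDeriv α f z := by
  unfold multiDeriv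
  induction List.finRange n with
  | nil => rfl
  | cons i l ih => simp only [List.foldr_cons, ih, iterate_pderivC_const_mul]

lemma xiAct_const_mul (ξ : (Fin n → ℕ) → ℂ) (a : ℂ) (f : (Fin n → ℂ) → ℂ) (z : Fin n → ℂ) :
    xiAct ξ (fun z => a * f z) z = a * xiAct ξ f z := by
  simp only [xiAct, multiDeriv_const_mul, ← tsum_mul_left]
  congr 1 with α
  ring

lemma summable_half_pow_mdeg : Summable fun α : Fin n → ℕ => (1 / 2 : ℝ) ^ mdeg α := by
  refine summable_of_sum_le (c := 2 ^ n) (fun α => by positivity) fun s => ?_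
  obtain ⟨N, hN⟩ : ∃ N, ∀ α ∈ s, ∀ i, α i < N := by
    refine ⟨s.sup mdeg + 1, fun α hα i => Nat.lt_succ_of_le ?_⟩
    exact (Finset.single_le_sum (f := α) (fun _ _ => Nat.zero_le _) (Finset.mem_univ i)).trans
      (Finset.le_sup (f := mdeg) hα)
  calc ∑ α ∈ s, (1 / 2 : ℝ) ^ mdeg α
      ≤ ∑ α ∈ Fintype.piFinset fun _ : Fin n => Finset.range N, (1 / 2 : ℝ) ^ mdeg α :=
        Finset.sum_le_sum_of_subset_of_nonneg
          (fun α hα => by simpa using hN α hα) fun _ _ _ => by positivity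
    _ = ∏ _i : Fin n, ∑ k ∈ Finset.range N, (1 / 2 : ℝ) ^ k := by
        rw [Finset.prod_univ_sum]
        simp only [mdeg, Finset.prod_pow_eq_pow_sum]
    _ ≤ ∏ _i : Fin n, (2 : ℝ) :=
        Finset.prod_le_prod (fun _ _ => by positivity) fun _ _ => sum_geometric_two_le N
    _ = 2 ^ n := by simp

end MultiDeriv

/-! ### Convergence of the functionals, the mean value inequality and Fatou's lemma -/

section Bergman

variable {n : ℕ}

lemma tendsto_xiAct {f : ℕ → (Fin n → ℂ) → ℂ} {F : (Fin n → ℂ) → ℂ} {U : Set (Fin n → ℂ)}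
    (hU : IsOpen U) (h : BoundedlyTendsto f F U) {x : Fin n → ℂ} (hx : x ∈ U)
    {u : ℕ → Fin n → ℂ} (hu : Tendsto u atTop (𝓝 x)) {η : ℕ → (Fin n → ℕ) → ℂ}
    {η₀ : (Fin n → ℕ) → ℂ} (hη : ∀ α, Tendsto (fun j => η j α) atTop (𝓝 (η₀ α)))
    (hb : ∀ ρ : ℝ, 0 < ρ → ∃ C : ℝ, ∀ᶠ j in atTop, ∀ α, ‖η j α‖ * ρ ^ mdeg α ≤ C) :
    Tendsto (fun j => xiAct (η j) (f j) (u j)) atTop (𝓝 (xiAct η₀ F x)) := by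
  obtain ⟨r, hr, M, hM⟩ := h.bdd x hx
  obtain ⟨δ, hδ, hδr⟩ : ∃ δ > 0, ((n : ℝ) + 1) * δ = r :=
    ⟨r / (n + 1), by positivity, by field_simp⟩
  obtain ⟨C, hC⟩ := hb (2 / δ) (by positivity)
  refine tendsto_tsum_of_dominated_convergence (bound := fun α => C * M * (1 / 2) ^ mdeg α)
    (summable_half_pow_mdeg.mul_left _) (fun α => ?_) ?_
  · exact ((hη α).mul ((h.multiDeriv hU α).tendsto_apply hx hu)).div_const _
  · filter_upwards [hM, hC, hu (Metric.ball_mem_nhds x hδ)] with j hj hCj hju α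
    have h1 := norm_multiDeriv_le hδ (hδr ▸ hj.1) (hδr ▸ hj.2) α hju
    have h2 := hCj α
    have hfact : (0 : ℝ) < mfact α := by
      exact_mod_cast Finset.prod_pos fun i _ => Nat.factorial_pos (α i)
    have hM0 : 0 ≤ M := (norm_nonneg _).trans (hj.2 x (Metric.mem_ball_self hr))
    rw [norm_div, norm_mul, Complex.norm_natCast]
    calc ‖η j α‖ * ‖multiDeriv α (f j) (u j)‖ / mfact α
        ≤ ‖η j α‖ * (mfact α * M / δ ^ mdeg α) / mfact α := by gcongr
      _ = (‖η j α‖ * (2 / δ) ^ mdeg α) * M * (1 / 2) ^ mdeg α := by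
          simp only [div_pow, one_pow]
          field_simp
      _ ≤ C * M * (1 / 2) ^ mdeg α := by gcongr

lemma measurePreserving_exp_smul (θ : ℝ) :
    MeasurePreserving (fun z : Fin n → ℂ => Complex.exp (θ * Complex.I) • z) := by
  have h : MeasurePreserving (fun z : ℂ => Complex.exp (θ * Complex.I) * z) := by
    convert (rotation (Circle.exp θ)).measurePreserving using 2
    rw [rotation_apply, Circle.coe_exp]
  exact volume_preserving_pi fun _ : Fin n => h

/-- Mean value inequality on complex circles for `|f|²`. -/
lemma ofReal_norm_sq_le_lintegral_circle {f : (Fin n → ℂ) → ℂ} {c ζ : Fin n → ℂ} {r : ℝ}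
    (hd : DifferentiableOn ℂ f (Metric.ball c r)) (hζ : ζ ∈ Metric.ball (0 : Fin n → ℂ) r) :
    ENNReal.ofReal (2 * Real.pi) * ENNReal.ofReal (‖f c‖ ^ 2) ≤
      ∫⁻ θ in Set.Ioc 0 (2 * Real.pi),
        ENNReal.ofReal (‖f (c + Complex.exp (θ * Complex.I) • ζ)‖ ^ 2) := by
  have hmaps : Set.MapsTo (fun t : ℂ => c + t • ζ) (Metric.closedBall 0 1) (Metric.ball c r) := by
    intro t ht
    rw [mem_closedBall_zero_iff] at ht
    rw [mem_ball_zero_iff] at hζ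
    rw [mem_ball_iff_norm, add_sub_cancel_left, norm_smul]
    exact (mul_le_of_le_one_left (norm_nonneg _) ht).trans_lt hζ
  have hg : DiffContOnCl ℂ (fun t : ℂ => f (c + t • ζ) ^ 2) (Metric.ball 0 |1|) := by
    rw [abs_one]
    refine DifferentiableOn.diffContOnCl_ball (U := Metric.closedBall 0 1) ?_ subset_rfl
    refine (hd.comp (Differentiable.differentiableOn ?_) hmaps).pow 2
    exact (differentiable_id.smul_const ζ).const_add c
  have hmean := hg.circleAverage
  rw [Real.circleAverage_def] at hmean
  simp only [circleMap, zero_add, Complex.ofReal_one, one_mul, zero_smul, add_zero] at hmean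
  rw [intervalIntegral.integral_of_le Real.two_pi_pos.le] at hmean
  have hnorm : 2 * Real.pi * ‖f c‖ ^ 2 = ‖∫ θ in Set.Ioc 0 (2 * Real.pi),
      f (c + Complex.exp (θ * Complex.I) • ζ) ^ 2‖ := by
    rw [← norm_pow, ← hmean, norm_smul, Real.norm_of_nonneg (by positivity)]
    rw [mul_inv_cancel_left₀ Real.two_pi_pos.ne']
  rw [← ENNReal.ofReal_mul Real.two_pi_pos.le, hnorm, ofReal_norm]
  refine (enorm_integral_le_lintegral_enorm _).trans_eq ?_
  congr 1 with θ
  rw [← ofReal_norm, norm_pow]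

/-- The `L²` mean value inequality on polydiscs. -/
lemma volume_ball_mul_norm_sq_le {f : (Fin n → ℂ) → ℂ} {c : Fin n → ℂ} {r : ℝ}
    (hd : DifferentiableOn ℂ f (Metric.ball c r)) :
    volume (Metric.ball (0 : Fin n → ℂ) r) * ENNReal.ofReal (‖f c‖ ^ 2) ≤
      ∫⁻ x in Metric.ball c r, ENNReal.ofReal (‖f x‖ ^ 2) := by
  set G : (Fin n → ℂ) → ℝ≥0∞ :=
    (Metric.ball c r).indicator fun x => ENNReal.ofReal (‖f x‖ ^ 2) with hG
  have hGm : Measurable G := by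
    have hc : ContinuousOn (fun x => ENNReal.ofReal (‖f x‖ ^ 2)) (Metric.ball c r) :=
      ENNReal.continuous_ofReal.comp_continuousOn (hd.continuousOn.norm.pow 2)
    classical
    rw [hG, ← Set.piecewise_eq_indicator]
    exact hc.measurable_piecewise continuousOn_const Metric.isOpen_ball.measurableSet
  have hjoint : Measurable (Function.uncurry fun (ζ : Fin n → ℂ) (θ : ℝ) =>
      G (c + Complex.exp (θ * Complex.I) • ζ)) := by
    refine hGm.comp (Continuous.measurable ?_)
    fun_prop
  have hpi : ENNReal.ofReal (2 * Real.pi) ≠ 0 := by simp [Real.pi_pos]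
  have hmono : ∀ ζ ∈ Metric.ball (0 : Fin n → ℂ) r,
      ENNReal.ofReal (2 * Real.pi) * ENNReal.ofReal (‖f c‖ ^ 2) ≤
        ∫⁻ θ in Set.Ioc 0 (2 * Real.pi), G (c + Complex.exp (θ * Complex.I) • ζ) := by
    intro ζ hζ
    refine (ofReal_norm_sq_le_lintegral_circle hd hζ).trans_eq ?_
    congr 1 with θ
    rw [hG, Set.indicator_of_mem]
    rw [mem_ball_zero_iff] at hζ
    rwa [mem_ball_iff_norm, add_sub_cancel_left, norm_smul, Complex.norm_exp_ofReal_mul_I, one_mul]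
  have hrot : ∀ θ : ℝ, ∫⁻ ζ, G (c + Complex.exp (θ * Complex.I) • ζ) = ∫⁻ x, G x := by
    intro θ
    rw [(measurePreserving_exp_smul θ).lintegral_comp (f := fun z => G (c + z))
      (hGm.comp (measurable_const_add c)), lintegral_add_left_eq_self]
  rw [← ENNReal.mul_le_mul_iff_right hpi ENNReal.ofReal_ne_top]
  calc ENNReal.ofReal (2 * Real.pi) *
        (volume (Metric.ball (0 : Fin n → ℂ) r) * ENNReal.ofReal (‖f c‖ ^ 2))
      = ∫⁻ _ζ in Metric.ball (0 : Fin n → ℂ) r,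
          ENNReal.ofReal (2 * Real.pi) * ENNReal.ofReal (‖f c‖ ^ 2) := by
        rw [setLIntegral_const]; ring
    _ ≤ ∫⁻ ζ in Metric.ball (0 : Fin n → ℂ) r, ∫⁻ θ in Set.Ioc 0 (2 * Real.pi),
          G (c + Complex.exp (θ * Complex.I) • ζ) :=
        setLIntegral_mono' Metric.isOpen_ball.measurableSet hmono
    _ ≤ ∫⁻ ζ, ∫⁻ θ in Set.Ioc 0 (2 * Real.pi), G (c + Complex.exp (θ * Complex.I) • ζ) :=
        setLIntegral_le_lintegral _ _
    _ = ∫⁻ θ in Set.Ioc 0 (2 * Real.pi), ∫⁻ ζ, G (c + Complex.exp (θ * Complex.I) • ζ) :=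
        lintegral_lintegral_swap hjoint.aemeasurable
    _ = ENNReal.ofReal (2 * Real.pi) * ∫⁻ x in Metric.ball c r, ENNReal.ofReal (‖f x‖ ^ 2) := by
        simp only [hrot, setLIntegral_const, Real.volume_Ioc, sub_zero]
        rw [hG, lintegral_indicator Metric.isOpen_ball.measurableSet, mul_comm]

/-- Pointwise bound by the weighted `L²` norm, for a weight bounded above near the point. -/
lemma volume_ball_mul_norm_sq_le_wL2 {f : (Fin n → ℂ) → ℂ} {c : Fin n → ℂ} {r A : ℝ}
    {D : Set (Fin n → ℂ)} {φ : (Fin n → ℂ) → ℝ} (hD : Metric.ball c r ⊆ D)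
    (hd : DifferentiableOn ℂ f D) (hφ : ∀ x ∈ Metric.ball c r, φ x ≤ A) :
    volume (Metric.ball (0 : Fin n → ℂ) r) * ENNReal.ofReal (‖f c‖ ^ 2) ≤
      ENNReal.ofReal (Real.exp A) * wL2 D φ f := by
  refine (volume_ball_mul_norm_sq_le (hd.mono hD)).trans ?_
  rw [wL2, ← lintegral_const_mul' _ _ ENNReal.ofReal_ne_top]
  refine (setLIntegral_mono' Metric.isOpen_ball.measurableSet fun x hx => ?_).trans
    (lintegral_mono_set hD)
  rw [← ENNReal.ofReal_mul (Real.exp_pos A).le]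
  refine ENNReal.ofReal_le_ofReal ?_
  have h1 : 1 ≤ Real.exp A * Real.exp (-φ x) := by
    rw [← Real.exp_add]
    exact Real.one_le_exp (by linarith [hφ x hx])
  calc ‖f x‖ ^ 2 = 1 * ‖f x‖ ^ 2 := (one_mul _).symm
    _ ≤ (Real.exp A * Real.exp (-φ x)) * ‖f x‖ ^ 2 := by gcongr
    _ = Real.exp A * (‖f x‖ ^ 2 * Real.exp (-φ x)) := by ring

lemma wL2_const_mul (D : Set (Fin n → ℂ)) (φ : (Fin n → ℂ) → ℝ) (a : ℂ) (f : (Fin n → ℂ) → ℂ) :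
    wL2 D φ (fun z => a * f z) = ENNReal.ofReal (‖a‖ ^ 2) * wL2 D φ f := by
  rw [wL2, wL2, ← lintegral_const_mul' _ _ ENNReal.ofReal_ne_top]
  congr 1 with z
  rw [← ENNReal.ofReal_mul (by positivity), norm_mul]
  ring_nf

/-- A lower bound for the kernel is realised by a function in the unit ball. -/
lemma exists_wL2_le_one_of_lt_xiBergman {ξ : (Fin n → ℕ) → ℂ} {D : Set (Fin n → ℂ)}
    {φ : (Fin n → ℂ) → ℝ} {z : Fin n → ℂ} {c : ℝ≥0∞} (h : c < xiBergman ξ D φ z) :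
    ∃ f, DifferentiableOn ℂ f D ∧ wL2 D φ f ≤ 1 ∧ c ≤ ENNReal.ofReal (‖xiAct ξ f z‖ ^ 2) := by
  obtain ⟨⟨f, hfd, hfW⟩, hf⟩ := lt_iSup_iff.mp h
  simp only at hf
  obtain ⟨s, hs, hsW, hsc⟩ : ∃ s : ℝ, 0 ≤ s ∧ ENNReal.ofReal s * wL2 D φ f ≤ 1 ∧
      c ≤ ENNReal.ofReal s * ENNReal.ofReal (‖xiAct ξ f z‖ ^ 2) := by
    rcases eq_or_ne (wL2 D φ f) 0 with hW | hW
    · have hA : 0 < ‖xiAct ξ f z‖ ^ 2 := by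
        by_contra hA
        rw [ENNReal.ofReal_of_nonpos (not_lt.mp hA), ENNReal.zero_div] at hf
        exact not_lt_bot hf
      refine ⟨c.toReal / ‖xiAct ξ f z‖ ^ 2, by positivity, by simp [hW], ?_⟩
      rw [← ENNReal.ofReal_mul (by positivity), div_mul_cancel₀ _ hA.ne',
        ENNReal.ofReal_toReal hf.ne_top]
    · refine ⟨(wL2 D φ f)⁻¹.toReal, ENNReal.toReal_nonneg, ?_, ?_⟩ <;>
        rw [ENNReal.ofReal_toReal (ENNReal.inv_ne_top.mpr hW)]
      · exact (ENNReal.inv_mul_cancel hW hfW.ne).le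
      · rw [mul_comm, ← div_eq_mul_inv]
        exact hf.le
  have hsq : ‖((√s : ℝ) : ℂ)‖ ^ 2 = s := by
    rw [Complex.norm_real, Real.norm_of_nonneg (Real.sqrt_nonneg s), Real.sq_sqrt hs]
  refine ⟨fun w => ((√s : ℝ) : ℂ) * f w, hfd.const_mul _, ?_, ?_⟩
  · rwa [wL2_const_mul, hsq]
  · rwa [xiAct_const_mul, norm_mul, mul_pow, hsq, ENNReal.ofReal_mul hs]

lemma le_xiBergman {ξ : (Fin n → ℕ) → ℂ} {D : Set (Fin n → ℂ)} {φ : (Fin n → ℂ) → ℝ}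
    {z : Fin n → ℂ} {f : (Fin n → ℂ) → ℂ} (hf : DifferentiableOn ℂ f D) (hW : wL2 D φ f ≤ 1) :
    ENNReal.ofReal (‖xiAct ξ f z‖ ^ 2) ≤ xiBergman ξ D φ z := by
  have hmem : MemA2 D φ f := ⟨hf, hW.trans_lt ENNReal.one_lt_top⟩
  refine le_trans ?_ (le_iSup (fun g : {g // MemA2 D φ g} =>
    ENNReal.ofReal (‖xiAct ξ g.1 z‖ ^ 2) / wL2 D φ g.1) ⟨f, hmem⟩)
  simpa only [div_one] using ENNReal.div_le_div_left hW (ENNReal.ofReal (‖xiAct ξ f z‖ ^ 2))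

/-- **Fatou's lemma** for weighted `L²` norms over varying domains, for weights whose upper limit
is at most the limiting weight. -/
lemma wL2_le_one_of_tendsto {D : ℕ → Set (Fin n → ℂ)} {D₀ : Set (Fin n → ℂ)}
    {φ : ℕ → (Fin n → ℂ) → ℝ} {φ₀ : (Fin n → ℂ) → ℝ} {f : ℕ → (Fin n → ℂ) → ℂ}
    {F : (Fin n → ℂ) → ℂ} (hD : ∀ j, IsOpen (D j)) (hD₀ : IsOpen D₀)
    (hf : ∀ j, ContinuousOn (f j) (D j))
    (hφ : ∀ j, UpperSemicontinuousOn (φ j) (D j))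
    (hmem : ∀ z ∈ D₀, ∀ᶠ j in atTop, z ∈ D j)
    (hlim : ∀ z ∈ D₀, Tendsto (fun j => f j z) atTop (𝓝 (F z)))
    (husc : ∀ z ∈ D₀, ∀ a, φ₀ z < a → ∀ᶠ j in atTop, φ j z < a)
    (hW : ∀ j, wL2 (D j) (φ j) (f j) ≤ 1) : wL2 D₀ φ₀ F ≤ 1 := by
  set h : ℕ → (Fin n → ℂ) → ℝ≥0∞ := fun j =>
    (D j).indicator fun z => ENNReal.ofReal (‖f j z‖ ^ 2 * Real.exp (-φ j z)) with hh
  have hmeas : ∀ j, AEMeasurable (h j) := by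
    intro j
    rw [hh, aemeasurable_indicator_iff (hD j).measurableSet]
    have h1 : AEMeasurable (f j) (volume.restrict (D j)) :=
      (hf j).aemeasurable (hD j).measurableSet
    have h2 : AEMeasurable (φ j) (volume.restrict (D j)) :=
      aemeasurable_restrict_of_measurable_subtype (hD j).measurableSet
        (upperSemicontinuousOn_iff_restrict.mpr (hφ j)).measurable
    exact ((h1.norm.pow_const 2).mul (Real.measurable_exp.comp_aemeasurable h2.neg)).ennreal_ofReal
  have hint : ∀ j, ∫⁻ z, h j z ≤ 1 := by
    intro j
    rw [hh, lintegral_indicator (hD j).measurableSet]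
    exact hW j
  have hpt : ∀ z ∈ D₀, ENNReal.ofReal (‖F z‖ ^ 2 * Real.exp (-φ₀ z)) ≤
      liminf (fun j => h j z) atTop := by
    intro z hz
    have hε : ∀ ε > 0, ENNReal.ofReal (‖F z‖ ^ 2 * Real.exp (-(φ₀ z + ε))) ≤
        liminf (fun j => h j z) atTop := by
      intro ε hε
      have ht : Tendsto (fun j => ENNReal.ofReal (‖f j z‖ ^ 2 * Real.exp (-(φ₀ z + ε)))) atTop
          (𝓝 (ENNReal.ofReal (‖F z‖ ^ 2 * Real.exp (-(φ₀ z + ε))))) :=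
        ENNReal.tendsto_ofReal (((hlim z hz).norm.pow 2).mul_const _)
      rw [← ht.liminf_eq]
      refine liminf_le_liminf ?_
      filter_upwards [hmem z hz, husc z hz (φ₀ z + ε) (by linarith)] with j hj hφj
      rw [hh]
      simp only [Set.indicator_of_mem hj]
      gcongr
    have hcont : Tendsto (fun ε : ℝ => ENNReal.ofReal (‖F z‖ ^ 2 * Real.exp (-(φ₀ z + ε))))
        (𝓝[>] 0) (𝓝 (ENNReal.ofReal (‖F z‖ ^ 2 * Real.exp (-φ₀ z)))) := by
      have hc : Continuous fun ε : ℝ => ENNReal.ofReal (‖F z‖ ^ 2 * Real.exp (-(φ₀ z + ε))) :=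
        ENNReal.continuous_ofReal.comp (by fun_prop)
      simpa using (hc.tendsto 0).mono_left nhdsWithin_le_nhds
    exact le_of_tendsto hcont (eventually_nhdsWithin_of_forall hε)
  calc wL2 D₀ φ₀ F ≤ ∫⁻ z in D₀, liminf (fun j => h j z) atTop :=
        setLIntegral_mono' hD₀.measurableSet hpt
    _ ≤ ∫⁻ z, liminf (fun j => h j z) atTop := setLIntegral_le_lintegral _ _
    _ ≤ liminf (fun j => ∫⁻ z, h j z) atTop := lintegral_liminf_le' hmeas
    _ ≤ 1 := by
        refine (liminf_le_liminf (v := fun _ => (1 : ℝ≥0∞)) (.of_forall hint)).trans_eq ?_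
        exact liminf_const _

end Bergman

/-! ### Fibres of a domain -/

section Fibre

variable {n m : ℕ} {Ω : Set ((Fin n → ℂ) × (Fin m → ℂ))} {ψ : (Fin n → ℂ) × (Fin m → ℂ) → ℝ}

lemma isOpen_fibre (hΩ : IsOpen Ω) (w : Fin m → ℂ) : IsOpen {z | (z, w) ∈ Ω} :=
  hΩ.preimage (by fun_prop : Continuous fun z : Fin n → ℂ => (z, w))

/-- Functions in the unit balls of weighted Bergman spaces of converging fibres are locally
bounded. -/
lemma locallyBoundedHolo_of_wL2_le_one (hΩ : IsOpen Ω) (hψ : UpperSemicontinuousOn ψ Ω)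
    {w : ℕ → Fin m → ℂ} {w₀ : Fin m → ℂ} (hw : Tendsto w atTop (𝓝 w₀))
    {f : ℕ → (Fin n → ℂ) → ℂ} (hf : ∀ j, DifferentiableOn ℂ (f j) {z | (z, w j) ∈ Ω})
    (hW : ∀ j, wL2 {z | (z, w j) ∈ Ω} (fun z => ψ (z, w j)) (f j) ≤ 1) :
    LocallyBoundedHolo f {z | (z, w₀) ∈ Ω} := by
  intro x hx
  have hev : ∀ᶠ p in 𝓝 (x, w₀), p ∈ Ω ∧ ψ p < ψ (x, w₀) + 1 := by
    have h := hψ _ hx (ψ (x, w₀) + 1) (by linarith)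
    rw [hΩ.nhdsWithin_eq hx] at h
    exact (hΩ.eventually_mem hx).and h
  obtain ⟨r, hr, hball⟩ := Metric.eventually_nhds_iff_ball.mp hev
  set A := ψ (x, w₀) + 1
  set V := volume (Metric.ball (0 : Fin n → ℂ) (r / 2)) with hV
  have hV0 : V ≠ 0 := (Metric.measure_ball_pos volume _ (half_pos hr)).ne'
  have hVtop : V ≠ ⊤ := measure_ball_lt_top.ne
  set B := (ENNReal.ofReal (Real.exp A) / V).toReal
  refine ⟨r / 2, half_pos hr, √B, ?_⟩
  filter_upwards [hw (Metric.ball_mem_nhds w₀ hr)] with j hj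
  have hmem : ∀ z ∈ Metric.ball x r, (z, w j) ∈ Ω ∧ ψ (z, w j) < A := fun z hz =>
    hball _ (by rw [← ball_prod_same]; exact ⟨hz, hj⟩)
  refine ⟨(hf j).mono fun z hz => (hmem z (Metric.ball_subset_ball (by linarith) hz)).1,
    fun y hy => ?_⟩
  have hyb : Metric.ball y (r / 2) ⊆ Metric.ball x r :=
    Metric.ball_subset_ball' (by linarith [Metric.mem_ball.mp hy])
  have h1 := volume_ball_mul_norm_sq_le_wL2 (fun z hz => (hmem z (hyb hz)).1) (hf j)
    (φ := fun z => ψ (z, w j)) (A := A) (fun z hz => (hmem z (hyb hz)).2.le)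
  have h2 : ENNReal.ofReal (‖f j y‖ ^ 2) ≤ ENNReal.ofReal (Real.exp A) / V := by
    rw [ENNReal.le_div_iff_mul_le (.inl hV0) (.inl hVtop), mul_comm]
    exact h1.trans (mul_le_of_le_one_right' (hW j))
  refine Real.le_sqrt_of_sq_le ?_
  exact (ENNReal.ofReal_le_iff_le_toReal
    (ENNReal.div_ne_top ENNReal.ofReal_ne_top hV0)).mp h2

lemma LocUnifBdd.exists_eventually_le {ξ : (Fin m → ℂ) → (Fin n → ℕ) → ℂ} {D : Set (Fin m → ℂ)}
    (h : LocUnifBdd ξ D) {w : ℕ → Fin m → ℂ} {w₀ : Fin m → ℂ} (hw₀ : w₀ ∈ D) (hwD : ∀ j, w j ∈ D)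
    (hw : Tendsto w atTop (𝓝 w₀)) (ρ : ℝ) (hρ : 0 < ρ) :
    ∃ C : ℝ, ∀ᶠ j in atTop, ∀ α, ‖ξ (w j) α‖ * ρ ^ mdeg α ≤ C := by
  obtain ⟨V, hV, C, hC⟩ := h w₀ hw₀ ρ hρ
  refine ⟨max C 0, ?_⟩
  filter_upwards [hw hV] with j hj α
  have h1 := (ENNReal.le_tsum α).trans (hC (w j) ⟨hj, hwD j⟩)
  exact (ENNReal.ofReal_le_ofReal_iff (le_max_right C 0)).mp
    (h1.trans (ENNReal.ofReal_le_ofReal (le_max_left C 0)))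

end Fibre

/-- Upper semicontinuity of the fiberwise `ξ(w)`-Bergman kernels `K^{ψ_w}_{ξ(w),Ω_w}(z)`
on a pseudoconvex domain `Ω ⊆ ℂ^{n+m}`, for a holomorphic, locally uniformly bounded
functional-valued function `ξ(·)` and a plurisubharmonic weight `ψ`. -/
theorem statement17 {n m : ℕ} (Ω : Set ((Fin n → ℂ) × (Fin m → ℂ)))
    (hΩ : Pseudoconvex Ω)
    (ψ : (Fin n → ℂ) × (Fin m → ℂ) → ℝ)
    (hψ : PlurisubharmonicOn (fun p => (ψ p : EReal)) Ω)
    (ξ : (Fin m → ℂ) → (Fin n → ℕ) → ℂ)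
    (hmem : ∀ w ∈ Prod.snd '' Ω, MemL1 (ξ w))
    (hhol : ∀ α : Fin n → ℕ, DifferentiableOn ℂ (fun w => ξ w α) (Prod.snd '' Ω))
    (hlub : LocUnifBdd ξ (Prod.snd '' Ω)) :
    UpperSemicontinuousOn (fun p => fiberKernel ξ Ω ψ p) Ω := by
  have hΩo := hΩ.1
  have husc : UpperSemicontinuousOn ψ Ω := fun p hp a ha =>
    (hψ.1 p hp (a : EReal) (EReal.coe_lt_coe_iff.mpr ha)).mono fun _ h =>
      EReal.coe_lt_coe_iff.mp h
  intro p₀ hp₀ y hy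
  by_contra hcon
  obtain ⟨c, hc, hcy⟩ := exists_between hy
  obtain ⟨p, hp, hpK⟩ := exists_seq_forall_of_frequently
    ((not_eventually.mp hcon).and_eventually self_mem_nhdsWithin)
  have hpΩ : ∀ j, p j ∈ Ω := fun j => (hpK j).2
  have hpt : Tendsto p atTop (𝓝 p₀) := hp.mono_right nhdsWithin_le_nhds
  have hz : Tendsto (fun j => (p j).1) atTop (𝓝 p₀.1) := (continuous_fst.tendsto p₀).comp hpt
  have hw : Tendsto (fun j => (p j).2) atTop (𝓝 p₀.2) := (continuous_snd.tendsto p₀).comp hpt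
  choose f hfd hfW hfc using fun j =>
    exists_wL2_le_one_of_lt_xiBergman (hcy.trans_le (not_lt.mp (hpK j).1))
  have hD₀ : IsOpen {z | (z, p₀.2) ∈ Ω} := isOpen_fibre hΩo p₀.2
  obtain ⟨φ, hφ, F, hF⟩ :=
    (locallyBoundedHolo_of_wL2_le_one hΩo husc hw hfd hfW).exists_subseq hD₀
  have hφt := hφ.tendsto_atTop
  have hwφ : Tendsto (fun j => (p (φ j)).2) atTop (𝓝 p₀.2) := hw.comp hφt
  have hslice : ∀ z : Fin n → ℂ,
      Tendsto (fun j => (z, (p (φ j)).2)) atTop (𝓝 (z, p₀.2)) := fun z =>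
    tendsto_const_nhds.prodMk_nhds hwφ
  have hFW : wL2 {z | (z, p₀.2) ∈ Ω} (fun z => ψ (z, p₀.2)) F ≤ 1 := by
    refine wL2_le_one_of_tendsto (fun j => isOpen_fibre hΩo (p (φ j)).2) hD₀
      (fun j => (hfd (φ j)).continuousOn) (fun j => ?_)
      (fun z hz => hslice z (hΩo.mem_nhds hz)) hF.lim (fun z hz a ha => ?_) (fun j => hfW (φ j))
    · exact husc.comp (by fun_prop) fun z hz => hz
    · have h := husc _ hz a ha
      rw [hΩo.nhdsWithin_eq hz] at h
      exact (hslice z).eventually h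
  have hwD : ∀ j, (p (φ j)).2 ∈ Prod.snd '' Ω := fun j => ⟨_, hpΩ _, rfl⟩
  have hw₀D : p₀.2 ∈ Prod.snd '' Ω := ⟨_, hp₀, rfl⟩
  have hxi := tendsto_xiAct hD₀ hF (x := p₀.1) hp₀ (hz.comp hφt)
    (η := fun j => ξ (p (φ j)).2) (η₀ := ξ p₀.2)
    (fun α => ((hhol α).continuousOn _ hw₀D).tendsto.comp
      (tendsto_nhdsWithin_iff.mpr ⟨hwφ, .of_forall hwD⟩))
    (hlub.exists_eventually_le hw₀D hwD hwφ)
  have hle : c ≤ ENNReal.ofReal (‖xiAct (ξ p₀.2) F p₀.1‖ ^ 2) :=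
    ge_of_tendsto' (ENNReal.tendsto_ofReal (hxi.norm.pow 2)) fun j => hfc (φ j)
  exact (hc.trans_le (hle.trans (le_xiBergman (hF.differentiableOn hD₀) hFW))).false
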